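/- For B ≥ 3, define h(η₁,…,η₈;B) = B^{−1}·max{ |η₂η₃η₄η₅η₆η₇η₈|, η₁²η₂²η₃³η₄²η₆, |η₁η₂η₃²η₄²η₅²η₆²η₇|, η₃η₄²η₅⁴η₆³η₇², |η₁^{−1}(η₂η₇η₈² + η₄η₅³η₆²η₇²η₈)| }, let R'(B) = {(η₁,…,η₈) : η₁,…,η₅ ∈ [1,∞), η₁²η₂²η₃³η₄² ≤ B, η₁³η₂³η₃⁴η₄²η₅^{−2} ≥ B, η₆ ∈ [0,∞), η₇ ∈ ℝ, η₈ ∈ ℝ, h(η;B) ≤ 1}, and V₀'(B) = ∫_{R'(B)} η₁^{−1} dη₁⋯dη₈. Let P' = {(t₁,…,t₅) ∈ ℝ_{≥0}⁵ : 2t₁+2t₂+3t₃+2t₄ ≤ 1 and 3t₁+3t₂+4t₃+2t₄−2t₅ ≥ 1}, and let ω_∞ = ∫ 1/(x₁|x₂|) dx₀dx₁dx₂ over {(x₀,x₁,x₂) ∈ ℝ³ : 0 ≤ x₁ ≤ 1, |x₀| ≤ 1, |x₂| ≤ 1, x₂² ≤ x₁, |x₀²x₁ + x₀x₂²| ≤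 x₁|x₂|}. Then V₀'(B) = vol(P')·ω_∞·B·(log B)⁵ for all B ≥ 3. -/

import Mathlib

/-!
The integral over `R'(B)` is computed by Tonelli, splitting `ℝ⁸` as `ℝ⁵ × ℝ³`. For fixed
`(η₁, …, η₅)` (called `u` below, with entries `u 0, …, u 4`), the substitution
`x₁ = η₁²η₂²η₃³η₄²η₆ / B`, `x₂ = η₁η₂η₃²η₄²η₅²η₆²η₇ / B`, `x₀ = η₂η₃η₄η₅η₆η₇η₈ / B`
carries the height condition to the domain of `ω_∞` (`hFun_le_one_iff`) and Lebesgue measure to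
`B / (η₂η₃η₄η₅)` times `dx₀ dx₁ dx₂ / (x₁|x₂|)` (`lintegral_torsor`), so that the fibre contributes
`B ω_∞ / (η₁⋯η₅)` (`lintegral_fibre`). The substitution `ηᵢ = B ^ tᵢ` (`lintegral_pos_exp`) then
turns the remaining integral of `1 / (η₁⋯η₅)` into `(log B)⁵ vol(P')`.

Everything is done with `[0, ∞]`-valued integrals, so no integrability has to be established:
`ENNReal.toReal` is multiplicative without any finiteness assumption.
-/

open MeasureTheory

/-- The height function `h(η₁,…,η₈; B)` (zero-indexed), obtained from the anticanonical height
after eliminating `η₉` via the torsor equation. -/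
noncomputable def hFun (η : Fin 8 → ℝ) (B : ℝ) : ℝ :=
  B⁻¹ * max (|η 1 * η 2 * η 3 * η 4 * η 5 * η 6 * η 7|)
    (max (η 0 ^ 2 * η 1 ^ 2 * η 2 ^ 3 * η 3 ^ 2 * η 5)
      (max (|η 0 * η 1 * η 2 ^ 2 * η 3 ^ 2 * η 4 ^ 2 * η 5 ^ 2 * η 6|)
        (max (η 2 * η 3 ^ 2 * η 4 ^ 4 * η 5 ^ 3 * η 6 ^ 2)
          (|(η 0)⁻¹ * (η 1 * η 6 * η 7 ^ 2 + η 3 * η 4 ^ 3 * η 5 ^ 2 * η 6 ^ 2 * η 7)|))))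

/-- The modified region `R'(B)`: `η₁,…,η₅ ≥ 1`, `η₁²η₂²η₃³η₄² ≤ B`,
`η₁³η₂³η₃⁴η₄²η₅⁻² ≥ B`, `η₆ ≥ 0`, `η₇, η₈ ∈ ℝ` and `h(η; B) ≤ 1`. -/
def RSet' (B : ℝ) : Set (Fin 8 → ℝ) :=
  {η | (∀ i : Fin 8, i.val ≤ 4 → 1 ≤ η i) ∧
    η 0 ^ 2 * η 1 ^ 2 * η 2 ^ 3 * η 3 ^ 2 ≤ B ∧
    B ≤ η 0 ^ 3 * η 1 ^ 3 * η 2 ^ 4 * η 3 ^ 2 * (η 4 ^ 2)⁻¹ ∧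
    0 ≤ η 5 ∧ hFun η B ≤ 1}

/-- `V₀'(B) = ∫_{R'(B)} η₁⁻¹ dη₁⋯dη₈`. -/
noncomputable def V0' (B : ℝ) : ℝ := ∫ η in RSet' B, (η 0)⁻¹

/-- The polytope `P'` whose volume is the constant `α(S̃)`. -/
def Pprime : Set (Fin 5 → ℝ) :=
  {t | (∀ i : Fin 5, 0 ≤ t i) ∧
    2 * t 0 + 2 * t 1 + 3 * t 2 + 2 * t 3 ≤ 1 ∧
    1 ≤ 3 * t 0 + 3 * t 1 + 4 * t 2 + 2 * t 3 - 2 * t 4}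

/-- The domain of integration of the archimedean density `ω_∞`. -/
def omegaSet : Set (Fin 3 → ℝ) :=
  {x | 0 ≤ x 1 ∧ x 1 ≤ 1 ∧ |x 0| ≤ 1 ∧ |x 2| ≤ 1 ∧ x 2 ^ 2 ≤ x 1 ∧
    |x 0 ^ 2 * x 1 + x 0 * x 2 ^ 2| ≤ x 1 * |x 2|}

/-- The archimedean density `ω_∞ = ∫ 1/(x₁|x₂|) dx₀ dx₁ dx₂`. -/
noncomputable def omegaInf : ℝ := ∫ x in omegaSet, (x 1 * |x 2|)⁻¹

/-! ### Tonelli and substitutions on `Fin n → ℝ` -/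

lemma lintegral_pi_insertNth {n : ℕ} (k : Fin (n + 1)) (f : (Fin (n + 1) → ℝ) → ENNReal)
    (hf : Measurable f) :
    ∫⁻ x, f x = ∫⁻ a : ℝ, ∫⁻ y : Fin n → ℝ, f (k.insertNth a y) := by
  have h := (volume_preserving_piFinSuccAbove (fun _ : Fin (n + 1) => ℝ) k).symm
  rw [← h.lintegral_comp_emb (MeasurableEquiv.measurableEmbedding _), Measure.volume_eq_prod,
    lintegral_prod]
  · rfl
  · exact (hf.comp (MeasurableEquiv.measurable _)).aemeasurable

lemma lintegral_pi_zero (f : (Fin 0 → ℝ) → ENNReal) :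
    ∫⁻ x, f x = f ![] := by
  simp [Measure.volume_pi_eq_dirac (ι := Fin 0) ![]]

lemma lintegral_comp_mul_left_real (g : ℝ → ENNReal) {k : ℝ} (hk : k ≠ 0) :
    ∫⁻ x, g (k * x) = ENNReal.ofReal |k⁻¹| * ∫⁻ x, g x := by
  rw [← smul_eq_mul, ← lintegral_smul_measure, ← Real.map_volume_mul_left hk]
  exact ((Homeomorph.mulLeft₀ k hk).measurableEmbedding.lintegral_map g).symm

lemma lintegral_append {m n : ℕ} (f : (Fin (m + n) → ℝ) → ENNReal) (hf : Measurable f) :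
    ∫⁻ x, f x = ∫⁻ u : Fin m → ℝ, ∫⁻ v : Fin n → ℝ, f (Fin.append u v) := by
  have h1 := volume_measurePreserving_piCongrLeft (fun _ : Fin (m + n) => ℝ)
    (finSumFinEquiv (m := m) (n := n))
  have h2 := volume_measurePreserving_sumPiEquivProdPi_symm (fun _ : Fin m ⊕ Fin n => ℝ)
  have h := h1.comp h2
  rw [← h1.lintegral_comp_emb (MeasurableEquiv.measurableEmbedding _),
    ← h2.lintegral_comp_emb (MeasurableEquiv.measurableEmbedding _), Measure.volume_eq_prod,
    lintegral_prod]
  · refine lintegral_congr fun u => lintegral_congr fun v => congrArg f ?_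
    ext i
    refine Fin.addCases (fun i => ?_) (fun i => ?_) i
    · rw [Fin.append_left, ← finSumFinEquiv_apply_left, MeasurableEquiv.piCongrLeft]
      exact Equiv.piCongrLeft_apply_apply _ finSumFinEquiv _ (Sum.inl i)
    · rw [Fin.append_right, ← finSumFinEquiv_apply_right, MeasurableEquiv.piCongrLeft]
      exact Equiv.piCongrLeft_apply_apply _ finSumFinEquiv _ (Sum.inr i)
  · exact (hf.comp h.measurable).aemeasurable

lemma lintegral_Ioi_exp (L : ℝ) (hL : 0 < L) (f : ℝ → ENNReal) :
    ∫⁻ x in Set.Ioi 0, f x =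
      ENNReal.ofReal L * ∫⁻ t, ENNReal.ofReal (Real.exp (L * t)) * f (Real.exp (L * t)) := by
  have him : (fun t : ℝ => Real.exp (L * t)) '' Set.univ = Set.Ioi 0 := by
    ext x
    simp only [Set.image_univ, Set.mem_range, Set.mem_Ioi]
    constructor
    · rintro ⟨t, rfl⟩
      exact Real.exp_pos _
    · intro hx
      exact ⟨Real.log x / L, by rw [mul_div_cancel₀ _ hL.ne', Real.exp_log hx]⟩
  rw [← him, lintegral_image_eq_lintegral_abs_deriv_mul MeasurableSet.univ
    (f' := fun t => L * Real.exp (L * t)), Measure.restrict_univ, ← lintegral_const_mul' _ _ (by simp)]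
  · refine lintegral_congr fun t => ?_
    rw [abs_of_pos (by positivity), ENNReal.ofReal_mul hL.le, mul_assoc]
  · intro t _
    have := ((hasDerivAt_id t).const_mul L).exp
    exact (this.congr_deriv (by simp [mul_comm])).hasDerivWithinAt
  · intro s _ t _ h
    exact mul_left_cancel₀ hL.ne' (Real.exp_injective h)

/-- The substitution `xᵢ = exp (L tᵢ)` in every coordinate, for a function supported on the open
positive orthant. -/
lemma lintegral_pos_exp (L : ℝ) (hL : 0 < L) : ∀ (n : ℕ) (f : (Fin n → ℝ) → ENNReal),
    Measurable f → (∀ x, (∃ i, x i ≤ 0) → f x = 0) →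
    ∫⁻ x, f x = ENNReal.ofReal L ^ n *
      ∫⁻ t : Fin n → ℝ, ENNReal.ofReal (∏ i, Real.exp (L * t i)) *
        f (fun i => Real.exp (L * t i)) := by
  intro n
  induction n with
  | zero =>
    intro f _ _
    simp only [lintegral_pi_zero]
    simp
    congr 1
    exact Subsingleton.elim _ _
  | succ n ih =>
    intro f hf h0
    rw [lintegral_pi_insertNth 0 f hf, lintegral_pi_insertNth 0 _ (by fun_prop)]
    have h1 : ∀ a : ℝ, ∫⁻ y : Fin n → ℝ, f (Fin.insertNth 0 a y) =
        (Set.Ioi 0).indicator (fun a : ℝ => ENNReal.ofReal L ^ n *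
          ∫⁻ t : Fin n → ℝ, ENNReal.ofReal (∏ i, Real.exp (L * t i)) *
            f (Fin.insertNth 0 a (fun i => Real.exp (L * t i)))) a := by
      intro a
      by_cases ha : 0 < a
      · rw [Set.indicator_of_mem (by exact ha)]
        refine ih (fun y => f (Fin.insertNth 0 a y)) ?_ ?_
        · refine hf.comp ?_
          rw [measurable_pi_iff]
          intro i
          refine Fin.cases ?_ (fun i => ?_) i
          · simp
          · simp only [Fin.insertNth_zero', Fin.cons_succ]
            fun_prop
        · rintro y ⟨i, hi⟩
          exact h0 _ ⟨i.succ, by simpa using hi⟩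
      · rw [Set.indicator_of_notMem (by exact ha)]
        simp only [not_lt] at ha
        refine (lintegral_congr fun y => h0 _ ⟨0, by simpa using ha⟩).trans (by simp)
    simp_rw [h1]
    rw [lintegral_indicator measurableSet_Ioi, lintegral_Ioi_exp L hL, pow_succ', mul_assoc]
    congr 1
    rw [← lintegral_const_mul' _ _ (by simp)]
    refine lintegral_congr fun a => ?_
    rw [mul_left_comm]
    congr 1
    rw [← lintegral_const_mul' _ _ (by simp)]
    refine lintegral_congr fun t => ?_
    rw [← mul_assoc, ← ENNReal.ofReal_mul (by positivity)]
    congr 1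
    · simp [Fin.prod_univ_succ]
    · congr 1
      ext i
      refine Fin.cases ?_ (fun i => ?_) i <;> simp

lemma lintegral_fin3 (f : (Fin 3 → ℝ) → ENNReal) (hf : Measurable f) :
    ∫⁻ x, f x = ∫⁻ a, ∫⁻ b, ∫⁻ c, f ![a, b, c] := by
  rw [lintegral_pi_insertNth 0 f hf]
  refine lintegral_congr fun a => ?_
  rw [lintegral_pi_insertNth 0]
  · refine lintegral_congr fun b => ?_
    rw [lintegral_pi_insertNth 0]
    · refine lintegral_congr fun c => ?_
      rw [lintegral_pi_zero]
      congr 1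
      ext i
      fin_cases i <;> rfl
    · refine hf.comp ?_
      rw [measurable_pi_iff]
      intro i
      fin_cases i <;> simp [Fin.insertNth, Fin.succAboveCases] <;> fun_prop
  · refine hf.comp ?_
    rw [measurable_pi_iff]
    intro i
    fin_cases i <;> simp [Fin.insertNth, Fin.succAboveCases] <;> fun_prop

/-- Tonelli on `ℝ³` with the outer variables being the second and third coordinates, matching the
order in which the triangular substitution produces them. -/
lemma lintegral_fin3_rot (f : (Fin 3 → ℝ) → ENNReal) (hf : Measurable f) :
    ∫⁻ x, f x = ∫⁻ b, ∫⁻ c, ∫⁻ a, f ![a, b, c] := by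
  rw [lintegral_pi_insertNth 1 f hf]
  refine lintegral_congr fun b => ?_
  rw [lintegral_pi_insertNth 1]
  · refine lintegral_congr fun c => ?_
    rw [lintegral_pi_insertNth 0]
    · refine lintegral_congr fun a => ?_
      rw [lintegral_pi_zero]
      congr 1
      ext i
      fin_cases i <;> rfl
    · refine hf.comp ?_
      rw [measurable_pi_iff]
      intro i
      fin_cases i <;> simp [Fin.insertNth, Fin.succAboveCases] <;> fun_prop
  · refine hf.comp ?_
    rw [measurable_pi_iff]
    intro i
    fin_cases i <;> simp [Fin.insertNth, Fin.succAboveCases] <;> fun_prop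

/-- The substitution `x = c p q r`, `y = a p`, `z = b p² q`. It is triangular: `x` is linear
in `r`, `z` is linear in `q` and `y` is linear in `p`, so three one-dimensional rescalings (of `r`,
then `q`, then `p`) suffice. The Jacobian `a b c p³ |q|` equals
`c y |z|`, which turns Lebesgue measure into the density of `ω_∞`, up to the factor `c⁻¹`. -/
lemma lintegral_torsor (a b c : ℝ) (ha : 0 < a) (hb : 0 < b) (hc : 0 < c)
    (f : ℝ → ℝ → ℝ → ENNReal) (hf : ∀ x y z, y ≤ 0 → f x y z = 0) :
    ∫⁻ p, ∫⁻ q, ∫⁻ r, f (c * p * q * r) (a * p) (b * p ^ 2 * q) =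
      ENNReal.ofReal c⁻¹ * ∫⁻ y, ∫⁻ z, ∫⁻ x, ENNReal.ofReal (y * |z|)⁻¹ * f x y z := by
  have key : ∀ p : ℝ, ∫⁻ q, ∫⁻ r, f (c * p * q * r) (a * p) (b * p ^ 2 * q) =
      (fun y => ENNReal.ofReal a * (ENNReal.ofReal c⁻¹ *
        ∫⁻ z, ∫⁻ x, ENNReal.ofReal (y * |z|)⁻¹ * f x y z)) (a * p) := by
    intro p
    rcases le_or_gt p 0 with hp | hp
    · have : a * p ≤ 0 := mul_nonpos_of_nonneg_of_nonpos ha.le hp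
      simp [hf _ _ _ this]
    have hq : (fun q => ∫⁻ r, f (c * p * q * r) (a * p) (b * p ^ 2 * q)) =ᵐ[volume]
        fun q => (fun z => ENNReal.ofReal (b * p ^ 2 * (c * p * |z|)⁻¹) *
          ∫⁻ x, f x (a * p) z) (b * p ^ 2 * q) := by
      filter_upwards [compl_mem_ae_iff.2 (measure_singleton (μ := volume) (0 : ℝ))] with q hq
      have hq : q ≠ 0 := hq
      rw [lintegral_comp_mul_left_real (fun x => f x (a * p) (b * p ^ 2 * q))
        (k := c * p * q) (by positivity)]
      congr 2
      rw [abs_inv, abs_mul, abs_mul (b * p ^ 2), abs_of_pos (show 0 < c * p by positivity),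
        abs_of_pos (show 0 < b * p ^ 2 by positivity)]
      have := abs_pos.2 hq
      field_simp
    beta_reduce
    rw [lintegral_congr_ae hq, lintegral_comp_mul_left_real
        (fun z => ENNReal.ofReal (b * p ^ 2 * (c * p * |z|)⁻¹) * ∫⁻ x, f x (a * p) z)
        (k := b * p ^ 2) (by positivity),
      ← lintegral_const_mul' _ _ (by simp), ← lintegral_const_mul' _ _ (by simp),
      ← lintegral_const_mul' _ _ (by simp)]
    refine lintegral_congr fun z => ?_
    rw [lintegral_const_mul' _ _ ENNReal.ofReal_ne_top, ← mul_assoc, ← mul_assoc, ← mul_assoc,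
      ← ENNReal.ofReal_mul (by positivity), ← ENNReal.ofReal_mul (by positivity),
      ← ENNReal.ofReal_mul (by positivity)]
    congr 2
    rw [abs_of_pos (by positivity)]
    rcases eq_or_ne z 0 with rfl | hz
    · simp
    have := abs_pos.2 hz
    field_simp
  simp_rw [key]
  rw [lintegral_comp_mul_left_real (fun y => ENNReal.ofReal a * (ENNReal.ofReal c⁻¹ *
        ∫⁻ z, ∫⁻ x, ENNReal.ofReal (y * |z|)⁻¹ * f x y z)) ha.ne',
    lintegral_const_mul' _ _ (by simp), ← mul_assoc, ← ENNReal.ofReal_mul (by positivity),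
    abs_of_pos (by positivity), inv_mul_cancel₀ ha.ne', lintegral_const_mul' _ _ (by simp)]
  simp
/-! ### The two substitutions applied to `R'(B)` -/

/-- The conditions of `RSet' B` that only involve the first five coordinates. Under
`u i = B ^ t i` this set corresponds to the polytope `Pprime`. -/
def QSet (B : ℝ) : Set (Fin 5 → ℝ) :=
  {u | (∀ i, 1 ≤ u i) ∧
    u 0 ^ 2 * u 1 ^ 2 * u 2 ^ 3 * u 3 ^ 2 ≤ B ∧
    B ≤ u 0 ^ 3 * u 1 ^ 3 * u 2 ^ 4 * u 3 ^ 2 * (u 4 ^ 2)⁻¹}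

open Classical in
/-- The indicator function of the part of `omegaSet` with `x₁ > 0`, in curried form. Dropping the
null set `x₁ = 0` makes it vanish for all nonpositive `x₁`. -/
noncomputable def omegaInd (x y z : ℝ) : ENNReal :=
  if 0 < y ∧ ![x, y, z] ∈ omegaSet then 1 else 0

lemma mem_RSet'_iff (u : Fin 5 → ℝ) (v : Fin 3 → ℝ) (B : ℝ) :
    Fin.append u v ∈ RSet' B ↔ u ∈ QSet B ∧ 0 ≤ v 0 ∧ hFun (Fin.append u v) B ≤ 1 := by
  have h : (∀ i : Fin 8, i.val ≤ 4 → 1 ≤ (Fin.append u v : Fin 8 → ℝ) i) ↔ ∀ i, 1 ≤ u i := by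
    constructor
    · intro h i
      have := h (Fin.castAdd 3 i) (by simp; omega)
      rwa [Fin.append_left] at this
    · intro h i
      refine Fin.addCases (m := 5) (n := 3) (fun i _ => ?_) (fun i hi => ?_) i
      · rw [Fin.append_left]; exact h i
      · simp at hi; omega
  unfold RSet' QSet
  simp only [Set.mem_ofPred_eq]
  rw [h]
  constructor
  · rintro ⟨h1, h2, h3, h4, h5⟩
    exact ⟨⟨h1, h2, h3⟩, h4, h5⟩
  · rintro ⟨⟨h1, h2, h3⟩, h4, h5⟩
    exact ⟨h1, h2, h3, h4, h5⟩

/-- For fixed first five coordinates, the height condition becomes membership in `omegaSet`: the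
entries of the maximum, divided by `B`, are `|x₀|`, `x₁`, `|x₂|`, `x₂² / x₁` and
`|x₀² x₁ + x₀ x₂²| / (x₁ |x₂|)`. -/
lemma hFun_le_one_iff (u : Fin 5 → ℝ) (hu : ∀ i, 0 < u i) (B : ℝ) (hB : 0 < B)
    (p q r : ℝ) (hp : 0 < p) :
    hFun (Fin.append u ![p, q, r]) B ≤ 1 ↔
      ![u 1 * u 2 * u 3 * u 4 / B * p * q * r,
        u 0 ^ 2 * u 1 ^ 2 * u 2 ^ 3 * u 3 ^ 2 / B * p,
        u 0 * u 1 * u 2 ^ 2 * u 3 ^ 2 * u 4 ^ 2 / B * p ^ 2 * q] ∈ omegaSet := by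
  have h0 := hu 0
  have h1 := hu 1
  have h2 := hu 2
  have h3 := hu 3
  have h4 := hu 4
  have hh : hFun (Fin.append u ![p, q, r]) B =
    B⁻¹ * max (|u 1 * u 2 * u 3 * u 4 * p * q * r|)
    (max (u 0 ^ 2 * u 1 ^ 2 * u 2 ^ 3 * u 3 ^ 2 * p)
      (max (|u 0 * u 1 * u 2 ^ 2 * u 3 ^ 2 * u 4 ^ 2 * p ^ 2 * q|)
        (max (u 2 * u 3 ^ 2 * u 4 ^ 4 * p ^ 3 * q ^ 2)
          (|(u 0)⁻¹ * (u 1 * q * r ^ 2 + u 3 * u 4 ^ 3 * p ^ 2 * q ^ 2 * r)|)))) := rfl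
  rw [hh, inv_mul_le_iff₀ hB, mul_one]
  simp only [max_le_iff]
  generalize u 0 = e0 at *
  generalize u 1 = e1 at *
  generalize u 2 = e2 at *
  generalize u 3 = e3 at *
  generalize u 4 = e4 at *
  simp only [omegaSet, Set.mem_ofPred_eq, Matrix.cons_val_zero, Matrix.cons_val_one,
    Matrix.cons_val]
  set x0 := e1 * e2 * e3 * e4 / B * p * q * r with hx0
  set x1 := e0 ^ 2 * e1 ^ 2 * e2 ^ 3 * e3 ^ 2 / B * p with hx1
  set x2 := e0 * e1 * e2 ^ 2 * e3 ^ 2 * e4 ^ 2 / B * p ^ 2 * q with hx2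
  set E := e0⁻¹ * (e1 * q * r ^ 2 + e3 * e4 ^ 3 * p ^ 2 * q ^ 2 * r) with hE
  have x1pos : 0 < x1 := by positivity
  have a0 : e1 * e2 * e3 * e4 * p * q * r = B * x0 := by rw [hx0]; field_simp
  have a1 : e0 ^ 2 * e1 ^ 2 * e2 ^ 3 * e3 ^ 2 * p = B * x1 := by rw [hx1]; field_simp
  have a2 : e0 * e1 * e2 ^ 2 * e3 ^ 2 * e4 ^ 2 * p ^ 2 * q = B * x2 := by rw [hx2]; field_simp
  have a3 : x1 * (e2 * e3 ^ 2 * e4 ^ 4 * p ^ 3 * q ^ 2) = B * x2 ^ 2 := by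
    rw [hx1, hx2]; field_simp
  have a4 : B * (x0 ^ 2 * x1 + x0 * x2 ^ 2) = (x1 * x2) * E := by
    rw [hx0, hx1, hx2, hE]; field_simp
  clear_value x0 x1 x2 E
  have b4 : B * |x0 ^ 2 * x1 + x0 * x2 ^ 2| = x1 * |x2| * |E| := by
    have := congrArg abs a4
    rwa [abs_mul, abs_mul, abs_mul, abs_of_pos hB, abs_of_pos x1pos] at this
  have c : ∀ x : ℝ, B * x ≤ B ↔ x ≤ 1 := fun x => by
    rw [mul_le_iff_le_one_right hB]
  rw [a0, a1, a2, abs_mul, abs_mul, abs_of_pos hB, c, c, c]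
  have d3 : e2 * e3 ^ 2 * e4 ^ 4 * p ^ 3 * q ^ 2 ≤ B ↔ x2 ^ 2 ≤ x1 := by
    rw [← mul_le_mul_iff_right₀ x1pos, a3, mul_comm x1 B, mul_le_mul_iff_right₀ hB]
  have d4 : |E| ≤ B ↔ |x0 ^ 2 * x1 + x0 * x2 ^ 2| ≤ x1 * |x2| := by
    rw [← mul_le_mul_iff_right₀ hB (b := |x0 ^ 2 * x1 + x0 * x2 ^ 2|), b4]
    rcases eq_or_ne q 0 with hq | hq
    · have : x2 = 0 := by rw [hx2, hq, mul_zero]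
      have : E = 0 := by rw [hE, hq]; ring
      simp [*, hB.le]
    · have : 0 < x1 * |x2| := by
        have : x2 ≠ 0 := by rw [hx2]; positivity
        positivity
      rw [mul_comm B, mul_le_mul_iff_right₀ this]
  rw [d3, d4]
  have := x1pos.le
  tauto

lemma measurableSet_omegaSet : MeasurableSet omegaSet := by
  unfold omegaSet
  measurability

lemma measurableSet_Pprime : MeasurableSet Pprime := by
  unfold Pprime
  measurability

lemma measurableSet_QSet (B : ℝ) : MeasurableSet (QSet B) := by
  unfold QSet
  measurability

lemma measurableSet_RSet' (B : ℝ) : MeasurableSet (RSet' B) := by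
  have : Measurable fun η : Fin 8 → ℝ => hFun η B := by
    unfold hFun
    fun_prop
  unfold RSet'
  measurability

lemma lintegral_omegaSet :
    ∫⁻ x in omegaSet, ENNReal.ofReal (x 1 * |x 2|)⁻¹ =
      ∫⁻ y, ∫⁻ z, ∫⁻ x, ENNReal.ofReal (y * |z|)⁻¹ * omegaInd x y z := by
  rw [← lintegral_indicator measurableSet_omegaSet, lintegral_fin3_rot]
  · refine lintegral_congr fun y => lintegral_congr fun z => lintegral_congr fun x => ?_
    unfold omegaInd
    by_cases h : ![x, y, z] ∈ omegaSet
    · have hy : 0 ≤ y := h.1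
      rcases hy.eq_or_lt with rfl | hy
      · simp [Set.indicator]
      · simp [h, hy]
    · simp [h]
  · exact Measurable.indicator (by fun_prop) measurableSet_omegaSet

/-- For positive `u`, the conditions `η₆ ≥ 0` and `h ≤ 1` cut out a fibre of volume
`B / (u 1 * u 2 * u 3 * u 4)` times `ω_∞`. -/
lemma lintegral_fibre (u : Fin 5 → ℝ) (hu : ∀ i, 0 < u i) (B : ℝ) (hB : 0 < B) :
    ∫⁻ v : Fin 3 → ℝ,
      {v : Fin 3 → ℝ | 0 ≤ v 0 ∧ hFun (Fin.append u v) B ≤ 1}.indicator 1 v =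
    ENNReal.ofReal (u 1 * u 2 * u 3 * u 4 / B)⁻¹ *
      ∫⁻ x in omegaSet, ENNReal.ofReal (x 1 * |x 2|)⁻¹ := by
  have h0 := hu 0
  have h1 := hu 1
  have h2 := hu 2
  have h3 := hu 3
  have h4 := hu 4
  have ha : 0 < u 0 ^ 2 * u 1 ^ 2 * u 2 ^ 3 * u 3 ^ 2 / B := by positivity
  rw [lintegral_omegaSet, ← lintegral_torsor (u 0 ^ 2 * u 1 ^ 2 * u 2 ^ 3 * u 3 ^ 2 / B)
    (u 0 * u 1 * u 2 ^ 2 * u 3 ^ 2 * u 4 ^ 2 / B) (u 1 * u 2 * u 3 * u 4 / B) ha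
    (by positivity) (by positivity) omegaInd
    (fun x y z hy => by simp [omegaInd, not_lt.2 hy]), lintegral_fin3]
  · refine lintegral_congr_ae ?_
    filter_upwards [compl_mem_ae_iff.2 (measure_singleton (μ := volume) (0 : ℝ))] with p hp
    have hp : p ≠ 0 := hp
    refine lintegral_congr fun q => lintegral_congr fun r => ?_
    unfold omegaInd
    rcases hp.lt_or_gt with hp | hp
    · rw [if_neg, Set.indicator_of_notMem]
      · exact fun h => not_le.2 hp h.1
      · exact fun h => hp.not_gt (pos_of_mul_pos_right h.1 ha.le)
    · have hiff := hFun_le_one_iff u hu B hB p q r hp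
      by_cases h : hFun (Fin.append u ![p, q, r]) B ≤ 1
      · rw [if_pos ⟨mul_pos ha hp, hiff.1 h⟩, Set.indicator_of_mem (by exact ⟨hp.le, h⟩),
          Pi.one_apply]
      · rw [if_neg fun hx => h (hiff.2 hx.2), Set.indicator_of_notMem fun hR => h hR.2]
  · refine Measurable.indicator measurable_one ?_
    have : Measurable fun v : Fin 3 → ℝ => hFun (Fin.append u v) B := by
      have h : Measurable fun η : Fin 8 → ℝ => hFun η B := by
        unfold hFun
        fun_prop
      refine h.comp ?_
      rw [measurable_pi_iff]
      refine fun i => Fin.addCases (m := 5) (n := 3) (fun i => ?_) (fun i => ?_) i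
      · simp only [Fin.append_left]; fun_prop
      · simp only [Fin.append_right]; fun_prop
    measurability

lemma exp_mem_QSet_iff (B : ℝ) (hB : 1 < B) (t : Fin 5 → ℝ) :
    (fun i => Real.exp (Real.log B * t i)) ∈ QSet B ↔ t ∈ Pprime := by
  have hL : 0 < Real.log B := Real.log_pos hB
  have hBe : B = Real.exp (Real.log B) := (Real.exp_log (by linarith)).symm
  generalize Real.log B = L at *
  subst hBe
  unfold QSet Pprime
  simp only [Set.mem_ofPred_eq, ← Real.exp_nat_mul, ← Real.exp_add, ← Real.exp_neg,
    Real.exp_le_exp, Real.one_le_exp_iff, mul_nonneg_iff_of_pos_left hL]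
  push_cast
  refine and_congr Iff.rfl (and_congr ?_ ?_)
  · exact ⟨fun h => le_of_mul_le_mul_left (by linarith) hL,
      fun h => by linarith [mul_le_mul_of_nonneg_left h hL.le]⟩
  · exact ⟨fun h => le_of_mul_le_mul_left (by linarith) hL,
      fun h => by linarith [mul_le_mul_of_nonneg_left h hL.le]⟩

lemma lintegral_RSet' (B : ℝ) (hB : 1 < B) :
    ∫⁻ η in RSet' B, ENNReal.ofReal (η 0)⁻¹ =
      ENNReal.ofReal (Real.log B) ^ 5 * ((ENNReal.ofReal B *
        ∫⁻ x in omegaSet, ENNReal.ofReal (x 1 * |x 2|)⁻¹) * volume Pprime) := by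
  have hB0 : 0 < B := by linarith
  set W := ∫⁻ x in omegaSet, ENNReal.ofReal (x 1 * |x 2|)⁻¹ with hW
  have hin : ∀ u : Fin 5 → ℝ, ∫⁻ v : Fin 3 → ℝ,
      (RSet' B).indicator (fun η => ENNReal.ofReal (η 0)⁻¹) (Fin.append u v) =
      (QSet B).indicator (fun u => ENNReal.ofReal (u 0)⁻¹ *
        (ENNReal.ofReal (u 1 * u 2 * u 3 * u 4 / B)⁻¹ * W)) u := by
    intro u
    by_cases hu : u ∈ QSet B
    · rw [Set.indicator_of_mem hu, hW,
        ← lintegral_fibre u (fun i => zero_lt_one.trans_le (hu.1 i)) B hB0,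
        ← lintegral_const_mul' _ _ (by simp)]
      refine lintegral_congr fun v => ?_
      simp only [Set.indicator, mem_RSet'_iff, hu, true_and, Set.mem_ofPred_eq]
      split_ifs
      · simp only [Pi.one_apply, mul_one]
        rfl
      · simp
    · rw [Set.indicator_of_notMem hu]
      refine (lintegral_congr fun v => ?_).trans lintegral_zero
      rw [Set.indicator_of_notMem]
      rw [mem_RSet'_iff]
      exact fun h => hu h.1
  rw [← lintegral_indicator (measurableSet_RSet' B),
    lintegral_append (m := 5) (n := 3) _
      (Measurable.indicator (by fun_prop) (measurableSet_RSet' B)),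
    lintegral_congr hin, lintegral_pos_exp (Real.log B) (Real.log_pos hB),
    ← lintegral_indicator_const measurableSet_Pprime]
  · congr 1
    refine lintegral_congr fun t => ?_
    by_cases ht : t ∈ Pprime
    · rw [Set.indicator_of_mem ht, Set.indicator_of_mem ((exp_mem_QSet_iff B hB t).2 ht),
        ← mul_assoc, ← mul_assoc, ← ENNReal.ofReal_mul (by positivity),
        ← ENNReal.ofReal_mul (by positivity)]
      congr 2
      simp only [Fin.prod_univ_five]
      have := fun i => (Real.exp_pos (Real.log B * t i)).ne'
      field_simp
    · rw [Set.indicator_of_notMem ht,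
        Set.indicator_of_notMem (fun h => ht ((exp_mem_QSet_iff B hB t).1 h)), mul_zero]
  · exact Measurable.indicator (by fun_prop) (measurableSet_QSet B)
  · rintro u ⟨i, hi⟩
    refine Set.indicator_of_notMem (fun h => ?_) _
    linarith [h.1 i]

/-- The exact evaluation `V₀'(B) = vol(P') · ω_∞ · B (log B)⁵`. -/
theorem V0'_eq : ∀ B : ℝ, 3 ≤ B →
    V0' B = (volume Pprime).toReal * omegaInf * B * Real.log B ^ 5 := by
  intro B hB
  have hV : V0' B = (∫⁻ η in RSet' B, ENNReal.ofReal (η 0)⁻¹).toReal := by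
    refine integral_eq_lintegral_of_nonneg_ae ?_
      (Measurable.aestronglyMeasurable (by fun_prop))
    refine ae_restrict_of_forall_mem (measurableSet_RSet' B) fun η hη => ?_
    exact inv_nonneg.2 (zero_le_one.trans (hη.1 0 (by simp)))
  have hω : omegaInf = (∫⁻ x in omegaSet, ENNReal.ofReal (x 1 * |x 2|)⁻¹).toReal := by
    refine integral_eq_lintegral_of_nonneg_ae ?_
      (Measurable.aestronglyMeasurable (by fun_prop))
    refine ae_restrict_of_forall_mem measurableSet_omegaSet fun x hx => ?_
    exact inv_nonneg.2 (mul_nonneg hx.1 (abs_nonneg _))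
  rw [hV, hω, lintegral_RSet' B (by linarith)]
  simp only [ENNReal.toReal_mul, ENNReal.toReal_pow]
  rw [ENNReal.toReal_ofReal (Real.log_nonneg (by linarith)),
    ENNReal.toReal_ofReal (by linarith)]
  ring
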